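/- Let n ≥ 3 and let u be harmonic on ℝⁿ \ B̄₁, continuous on ℝⁿ \ B₁, with |u(x)| ≤ |x| for all |x| ≥ 1. Then there exist an affine function P(x) = b·x + c and a constant C depending only on n such that |u(x) − P(x)| ≤ C|x|^{2−n} for all |x| ≥ 2, and |∇u(x) − b| ≤ C|x|^{1−n} for all |x| ≥ 4. -/

import Mathlib

noncomputable def lap (n : ℕ) (u : EuclideanSpace ℝ (Fin n) → ℝ)
    (x : EuclideanSpace ℝ (Fin n)) : ℝ :=
  ∑ i, fderiv ℝ (fun y => fderiv ℝ u y (EuclideanSpace.single i 1)) x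
    (EuclideanSpace.single i 1)

/-!
Let `Φ` be the fundamental solution `‖z‖ ^ (2 - d)`. Green's identity for `ζ Φ(· - x)`, with `Φ`
regularized at its pole and `ζ` a compactly supported cutoff, recovers `ζ x * u x` from the values
of a harmonic function `u` on the support of `∇ ζ`. Taking for `ζ` the difference of a cutoff at
scale `R` and one at scale `1` writes `u` as a far potential minus a near one. The near potential
does not depend on `R` and decays like `Φ`. As `u` grows linearly, Taylor's formula shows that the
far potential is affine up to an error `O(‖x‖ ^ 2 / R)`, so that letting `R → ∞` leaves an affine
function `P`. The same Taylor expansion yields the interior gradient estimate, which turns the decay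
of `u - P` into the decay of its gradient.
-/

open Filter InnerProductSpace Laplacian MeasureTheory Metric Module Set Topology

section LaplacianCalculus

variable {E : Type*} [NormedAddCommGroup E] [InnerProductSpace ℝ E] [FiniteDimensional ℝ E]
  {f g : E → ℝ} {x : E}

lemma laplacian_eq_sum_fderiv_fderiv {ι : Type*} [Fintype ι] (b : OrthonormalBasis ι ℝ E)
    (f : E → ℝ) (x : E) :
    Δ f x = ∑ i, fderiv ℝ (fderiv ℝ f) x (b i) (b i) := by
  simp [laplacian_eq_iteratedFDeriv_orthonormalBasis f b, iteratedFDeriv_two_apply]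

lemma laplacian_eq_sum_fderiv_fderiv_apply {ι : Type*} [Fintype ι] (b : OrthonormalBasis ι ℝ E)
    (hf : ContDiffAt ℝ 2 f x) :
    Δ f x = ∑ i, fderiv ℝ (fun y => fderiv ℝ f y (b i)) x (b i) := by
  have hf' : DifferentiableAt ℝ (fderiv ℝ f) x :=
    (hf.fderiv_right (m := 1) (by norm_num)).differentiableAt one_ne_zero
  rw [laplacian_eq_sum_fderiv_fderiv b]
  refine Finset.sum_congr rfl fun i _ => ?_
  rw [fderiv_clm_apply hf' (differentiableAt_const _)]
  simp

lemma laplacian_mul (hf : ContDiffAt ℝ 2 f x) (hg : ContDiffAt ℝ 2 g x) :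
    Δ (fun y => f y * g y) x = Δ f x * g x + 2 * ⟪gradient f x, gradient g x⟫_ℝ + f x * Δ g x := by
  let b := stdOrthonormalBasis ℝ E
  have hf' : DifferentiableAt ℝ (fderiv ℝ f) x :=
    (hf.fderiv_right (m := 1) (by norm_num)).differentiableAt one_ne_zero
  have hg' : DifferentiableAt ℝ (fderiv ℝ g) x :=
    (hg.fderiv_right (m := 1) (by norm_num)).differentiableAt one_ne_zero
  have hfd := hf.differentiableAt two_ne_zero
  have hgd := hg.differentiableAt two_ne_zero
  have hfderiv : fderiv ℝ (fun y => f y * g y)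
      =ᶠ[𝓝 x] fun y => f y • fderiv ℝ g y + g y • fderiv ℝ f y := by
    filter_upwards [hf.eventually (by simp), hg.eventually (by simp)] with y hfy hgy
    exact fderiv_fun_mul (hfy.differentiableAt two_ne_zero) (hgy.differentiableAt two_ne_zero)
  have hinner : ⟪gradient f x, gradient g x⟫_ℝ
      = ∑ i, fderiv ℝ f x (b i) * fderiv ℝ g x (b i) := by
    rw [← b.sum_inner_mul_inner]
    simp [inner_gradient_left]
  simp only [laplacian_eq_sum_fderiv_fderiv b, hfderiv.fderiv_eq, hinner, Finset.mul_sum,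
    Finset.sum_mul, ← Finset.sum_add_distrib]
  refine Finset.sum_congr rfl fun i _ => ?_
  rw [fderiv_fun_add (hfd.fun_smul hg') (hgd.fun_smul hf'), fderiv_fun_smul hfd hg',
    fderiv_fun_smul hgd hf']
  simp only [add_apply, smul_apply, ContinuousLinearMap.smulRight_apply, smul_eq_mul]
  ring

lemma laplacian_comp_smul (c : ℝ) (f : E → ℝ) (x : E) :
    Δ (fun y => f (c • y)) x = c ^ 2 * Δ f (c • x) := by
  simp only [laplacian_eq_sum_fderiv_fderiv (stdOrthonormalBasis ℝ E), Finset.mul_sum]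
  refine Finset.sum_congr rfl fun i _ => ?_
  have hfderiv : fderiv ℝ (fun y => f (c • y)) = c • fun y => fderiv ℝ f (c • y) :=
    funext fun _ => fderiv_comp_smul ..
  rw [hfderiv, fderiv_const_smul_field (f := fun y => fderiv ℝ f (c • y)) c, Pi.smul_apply,
    fderiv_comp_smul]
  simp only [smul_apply, smul_eq_mul]
  ring

lemma laplacian_comp_sub (f : E → ℝ) (a x : E) : Δ (fun y => f (y - a)) x = Δ f (x - a) := by
  simp [laplacian_eq_iteratedFDeriv_stdOrthonormalBasis, iteratedFDeriv_comp_sub]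

lemma laplacian_eq_zero_of_notMem_tsupport_fderiv (hx : x ∉ tsupport (fderiv ℝ f)) :
    Δ f x = 0 := by
  simp [laplacian_eq_sum_fderiv_fderiv (stdOrthonormalBasis ℝ E),
    (notMem_tsupport_iff_eventuallyEq.1 hx).fderiv_eq]

lemma contDiff_laplacian {m : WithTop ℕ∞} (hf : ContDiff ℝ (m + 2) f) : ContDiff ℝ m (Δ f) := by
  have : Δ f = fun x => ∑ i, fderiv ℝ (fderiv ℝ f) x (stdOrthonormalBasis ℝ E i)
      (stdOrthonormalBasis ℝ E i) :=
    funext (laplacian_eq_sum_fderiv_fderiv _ f)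
  have hf' : ContDiff ℝ m (fderiv ℝ (fderiv ℝ f)) :=
    (hf.fderiv_right (m := m + 1) (by rw [add_assoc, one_add_one_eq_two])).fderiv_right le_rfl
  rw [this]
  fun_prop

lemma harmonicAt_comp_smul_add {c : ℝ} {a : E} (hf : HarmonicAt f (c • x + a)) :
    HarmonicAt (fun y => f (c • y + a)) x := by
  have hcont : ContinuousAt (fun y => c • y + a) x := by fun_prop
  refine ⟨hf.1.comp (f := fun y => c • y + a) x (by fun_prop), ?_⟩
  filter_upwards [hcont.eventually hf.2] with y hy
  have := laplacian_comp_smul c (fun z => f (z - -a)) y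
  rw [laplacian_comp_sub, sub_neg_eq_add, hy] at this
  simpa using this

lemma harmonicAt_clm (ℓ : E →L[ℝ] ℝ) (x : E) : HarmonicAt ℓ x := by
  refine ⟨ℓ.contDiff.contDiffAt, Eventually.of_forall fun y => ?_⟩
  have hfderiv : fderiv ℝ ℓ = fun _ => ℓ := funext fun _ => ℓ.fderiv
  simp [laplacian_eq_sum_fderiv_fderiv (stdOrthonormalBasis ℝ E), hfderiv]

end LaplacianCalculus

section GreenIdentity

variable {E : Type*} [NormedAddCommGroup E]

lemma continuous_mul_of_continuousAt_tsupport {f g : E → ℝ} (hf : Continuous f)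
    (hg : ∀ x ∈ tsupport f, ContinuousAt g x) : Continuous fun x => f x * g x :=
  continuous_of_tsupport fun x hx => hf.continuousAt.mul (hg x (tsupport_mul_subset_left hx))

lemma integrable_mul_of_continuousAt_tsupport [MeasurableSpace E] [OpensMeasurableSpace E]
    {μ : Measure E} [IsFiniteMeasureOnCompacts μ] {f g : E → ℝ} (hf : Continuous f)
    (hfc : HasCompactSupport f) (hg : ∀ x ∈ tsupport f, ContinuousAt g x) :
    Integrable (fun x => f x * g x) μ :=
  (continuous_mul_of_continuousAt_tsupport hf hg).integrable_of_hasCompactSupport hfc.mul_right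

variable [InnerProductSpace ℝ E] [FiniteDimensional ℝ E] [MeasurableSpace E] [BorelSpace E]
  {μ : Measure E} [μ.IsAddHaarMeasure]

lemma integral_fderiv_mul_eq_neg {f g : E → ℝ} (hf : ContDiff ℝ 1 f) (hfc : HasCompactSupport f)
    (hg : ∀ x ∈ tsupport f, ContDiffAt ℝ 1 g x) (v : E) :
    ∫ x, fderiv ℝ f x v * g x ∂μ = -∫ x, f x * fderiv ℝ g x v ∂μ := by
  have hg' : ∀ x ∈ tsupport f, ContinuousAt (fun y => fderiv ℝ g y v) x := fun x hx =>
    ((hg x hx).fderiv_right (m := 0) le_rfl).continuousAt.clm_apply continuousAt_const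
  have hf' : Continuous fun x => fderiv ℝ f x v :=
    (hf.continuous_fderiv one_ne_zero).clm_apply continuous_const
  rw [integral_mul_fderiv_eq_neg_fderiv_mul_of_integrable, neg_neg]
  · exact integrable_mul_of_continuousAt_tsupport hf' (hfc.fderiv_apply ℝ v) fun x hx =>
      (hg x (tsupport_fderiv_apply_subset ℝ v hx)).continuousAt
  · exact integrable_mul_of_continuousAt_tsupport hf.continuous hfc hg'
  · exact integrable_mul_of_continuousAt_tsupport hf.continuous hfc fun x hx =>
      (hg x hx).continuousAt
  · exact fun x _ => hf.differentiable one_ne_zero x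
  · exact fun x hx => (hg x hx).differentiableAt one_ne_zero

lemma integral_laplacian_mul_eq_integral_mul_laplacian {f g : E → ℝ} (hf : ContDiff ℝ 2 f)
    (hfc : HasCompactSupport f) (hg : ∀ x ∈ tsupport f, ContDiffAt ℝ 2 g x) :
    ∫ x, Δ f x * g x ∂μ = ∫ x, f x * Δ g x ∂μ := by
  let b := stdOrthonormalBasis ℝ E
  have hf1 (v : E) : ContDiff ℝ 1 fun x => fderiv ℝ f x v :=
    (hf.fderiv_right (m := 1) le_rfl).clm_apply contDiff_const
  have hf1c (v : E) : HasCompactSupport fun x => fderiv ℝ f x v := hfc.fderiv_apply ℝ v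
  have hf1s (v : E) : tsupport (fun x => fderiv ℝ f x v) ⊆ tsupport f :=
    tsupport_fderiv_apply_subset ℝ v
  have hf2 (v : E) : Continuous fun x => fderiv ℝ (fun y => fderiv ℝ f y v) x v :=
    ((hf1 v).continuous_fderiv one_ne_zero).clm_apply continuous_const
  have hg1 (v : E) : ∀ x ∈ tsupport f, ContDiffAt ℝ 1 (fun y => fderiv ℝ g y v) x := fun x hx =>
    ((hg x hx).fderiv_right (m := 1) le_rfl).clm_apply contDiffAt_const
  have hg2 (v : E) : ∀ x ∈ tsupport f,
      ContinuousAt (fun y => fderiv ℝ (fun z => fderiv ℝ g z v) y v) x := fun x hx =>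
    ((hg1 v x hx).fderiv_right (m := 0) le_rfl).continuousAt.clm_apply continuousAt_const
  have hΔg (x : E) : f x * Δ g x
      = ∑ i, f x * fderiv ℝ (fun y => fderiv ℝ g y (b i)) x (b i) := by
    by_cases hx : x ∈ tsupport f
    · rw [laplacian_eq_sum_fderiv_fderiv_apply b (hg x hx), Finset.mul_sum]
    · simp [image_eq_zero_of_notMem_tsupport hx]
  simp only [laplacian_eq_sum_fderiv_fderiv_apply b hf.contDiffAt, Finset.sum_mul, hΔg]
  rw [integral_finsetSum _ fun i _ => ?_, integral_finsetSum _ fun i _ => ?_]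
  · refine Finset.sum_congr rfl fun i _ => ?_
    rw [integral_fderiv_mul_eq_neg (hf1 _) (hf1c _) fun x hx =>
        (hg x (hf1s _ hx)).of_le one_le_two,
      integral_fderiv_mul_eq_neg (hf.of_le one_le_two) hfc (hg1 _), neg_neg]
  · exact integrable_mul_of_continuousAt_tsupport hf.continuous hfc (hg2 _)
  · exact integrable_mul_of_continuousAt_tsupport (hf2 _) ((hf1c _).fderiv_apply ℝ _) fun x hx =>
      (hg x (hf1s _ (tsupport_fderiv_apply_subset ℝ _ hx))).continuousAt

lemma integral_laplacian_mul_eq_zero {f u : E → ℝ} (hf : ContDiff ℝ 2 f)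
    (hfc : HasCompactSupport f) (hu : HarmonicOnNhd u (tsupport f)) :
    ∫ x, Δ f x * u x ∂μ = 0 := by
  rw [integral_laplacian_mul_eq_integral_mul_laplacian hf hfc fun x hx => (hu x hx).1]
  refine integral_eq_zero_of_ae (Eventually.of_forall fun x => ?_)
  by_cases hx : x ∈ tsupport f
  · simp [(hu x hx).2.eq_of_nhds]
  · simp [image_eq_zero_of_notMem_tsupport hx]

end GreenIdentity

section RegularizedPower

variable {E : Type*} [NormedAddCommGroup E]

/-- The regularization `(‖z‖² + ε) ^ (s / 2)` of `‖z‖ ^ s`. -/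
noncomputable def regPow (s ε : ℝ) (z : E) : ℝ := (‖z‖ ^ 2 + ε) ^ (s / 2)

variable {ε : ℝ} {z : E}

lemma regPow_zero (s : ℝ) (z : E) : regPow s 0 z = ‖z‖ ^ s := by
  rw [regPow, add_zero, ← Real.rpow_natCast, ← Real.rpow_mul (norm_nonneg z)]
  congr 1
  push_cast
  ring

lemma regPow_mul (s : ℝ) (hz : 0 < ‖z‖ ^ 2 + ε) :
    regPow s ε z * (‖z‖ ^ 2 + ε) = regPow (s + 2) ε z := by
  rw [regPow, regPow, ← Real.rpow_add_one hz.ne']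
  congr 1
  ring

lemma regPow_smul [NormedSpace ℝ E] {c : ℝ} (hc : 0 < c) (hε : 0 ≤ ε) (s : ℝ) (z : E) :
    regPow s (c ^ 2 * ε) (c • z) = c ^ s * regPow s ε z := by
  rw [regPow, regPow, norm_smul, mul_pow, Real.norm_eq_abs, sq_abs, ← mul_add,
    Real.mul_rpow (sq_nonneg c) (by positivity), ← Real.rpow_natCast c, ← Real.rpow_mul hc.le]
  congr 2
  push_cast
  ring

lemma continuousOn_regPow (s : ℝ) :
    ContinuousOn (fun p : ℝ × E => regPow s p.1 p.2) {p | 0 < ‖p.2‖ ^ 2 + p.1} := by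
  unfold regPow
  exact ContinuousOn.rpow_const (by fun_prop) fun p hp => Or.inl (ne_of_gt hp)

variable [InnerProductSpace ℝ E]

lemma contDiffAt_regPow {m : WithTop ℕ∞} (s : ℝ) (hz : 0 < ‖z‖ ^ 2 + ε) :
    ContDiffAt ℝ m (regPow s ε) z :=
  ((contDiffAt_id.norm_sq ℝ).add contDiffAt_const).rpow_const_of_ne hz.ne'

lemma contDiff_regPow_sub {m : WithTop ℕ∞} (s : ℝ) (hε : 0 < ε) (x : E) :
    ContDiff ℝ m fun y => regPow s ε (y - x) :=
  contDiff_iff_contDiffAt.2 fun y =>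
    (contDiffAt_regPow s (z := y - x) (by positivity)).comp y
      (g := regPow s ε) (contDiffAt_id.sub contDiffAt_const)

lemma hasFDerivAt_regPow (s : ℝ) (hz : 0 < ‖z‖ ^ 2 + ε) :
    HasFDerivAt (regPow s ε) ((s * regPow (s - 2) ε z) • innerSL ℝ z) z := by
  have := (((hasStrictFDerivAt_norm_sq z).hasFDerivAt.add_const ε).rpow_const
    (p := s / 2) (Or.inl hz.ne'))
  refine this.congr_fderiv ?_
  rw [← Nat.cast_smul_eq_nsmul ℝ, smul_smul, regPow]
  congr 1
  ring_nf

lemma laplacian_regPow [FiniteDimensional ℝ E] (s : ℝ) (hz : 0 < ‖z‖ ^ 2 + ε) :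
    Δ (regPow s ε : E → ℝ) z = s * (finrank ℝ E + s - 2) * regPow (s - 2) ε z
      - s * (s - 2) * ε * regPow (s - 4) ε z := by
  let L : E →L[ℝ] E →L[ℝ] ℝ := innerSL ℝ
  have hL (v w : E) : L v w = ⟪v, w⟫_ℝ := rfl
  have hopen : IsOpen {y : E | 0 < ‖y‖ ^ 2 + ε} :=
    isOpen_lt continuous_const (by fun_prop)
  have hfderiv : fderiv ℝ (regPow s ε)
      =ᶠ[𝓝 z] fun y => (s * regPow (s - 2) ε y) • L y := by
    filter_upwards [hopen.mem_nhds hz] with y hy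
    exact (hasFDerivAt_regPow s hy).fderiv
  have hfderiv2 := ((hasFDerivAt_regPow (s - 2) hz).const_mul s).fun_smul L.hasFDerivAt
  have hnorm : ∑ i, ⟪z, stdOrthonormalBasis ℝ E i⟫_ℝ ^ 2 = ‖z‖ ^ 2 := by
    rw [← (stdOrthonormalBasis ℝ E).sum_sq_norm_inner_left z]
    simp
  have hmul := regPow_mul (s - 4) hz
  simp only [laplacian_eq_sum_fderiv_fderiv (stdOrthonormalBasis ℝ E), hfderiv.fderiv_eq,
    hfderiv2.fderiv]
  calc _ = ∑ i, (s * regPow (s - 2) ε z + s * (s - 2) * regPow (s - 4) ε z *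
        ⟪z, stdOrthonormalBasis ℝ E i⟫_ℝ ^ 2) := by
        refine Finset.sum_congr rfl fun i _ => ?_
        simp only [show s - 2 - 2 = s - 4 by ring, add_apply, smul_apply,
          ContinuousLinearMap.smulRight_apply, coe_innerSL_apply, hL, real_inner_self_eq_norm_sq,
          OrthonormalBasis.norm_eq_one, smul_eq_mul]
        ring
    _ = finrank ℝ E * (s * regPow (s - 2) ε z)
        + s * (s - 2) * regPow (s - 4) ε z * ‖z‖ ^ 2 := by
        rw [Finset.sum_add_distrib, ← Finset.mul_sum _ _ (s * (s - 2) * _), hnorm]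
        simp
    _ = _ := by
        rw [show s - 4 + 2 = s - 2 by ring] at hmul
        linear_combination s * (s - 2) * hmul

end RegularizedPower

section ApproximateIdentity

variable {E : Type*} [NormedAddCommGroup E] [InnerProductSpace ℝ E]

lemma inv_sqrt_pow_mul_regPow_smul {ε : ℝ} (hε : 0 < ε) (n : ℕ) (z : E) :
    (√ε)⁻¹ ^ n * regPow (-n - 2) 1 ((√ε)⁻¹ • z) = ε * regPow (-n - 2) ε z := by
  have hc : 0 < (√ε)⁻¹ := by positivity
  have hsq : (√ε)⁻¹ ^ 2 = ε⁻¹ := by rw [inv_pow, Real.sq_sqrt hε.le]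
  have hpow : (√ε)⁻¹ ^ (-2 : ℝ) = ε := by
    rw [Real.rpow_neg hc.le, Real.rpow_two, hsq, inv_inv]
  calc (√ε)⁻¹ ^ n * regPow (-n - 2) 1 ((√ε)⁻¹ • z)
      = (√ε)⁻¹ ^ n * regPow (-n - 2) ((√ε)⁻¹ ^ 2 * ε) ((√ε)⁻¹ • z) := by
        rw [hsq, inv_mul_cancel₀ hε.ne']
    _ = (√ε)⁻¹ ^ (n + (-n - 2) : ℝ) * regPow (-n - 2) ε z := by
        rw [regPow_smul hc hε.le, ← mul_assoc, Real.rpow_add hc, Real.rpow_natCast]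
    _ = ε * regPow (-n - 2) ε z := by rw [show (n + (-n - 2) : ℝ) = -2 by ring, hpow]

lemma tendsto_norm_pow_mul_regPow_cobounded :
    Tendsto (fun z : E => ‖z‖ ^ finrank ℝ E * regPow (-finrank ℝ E - 2) 1 z)
      (Bornology.cobounded E) (𝓝 0) := by
  have hlim : Tendsto (fun z : E => ‖z‖ ^ (-2 : ℝ)) (Bornology.cobounded E) (𝓝 0) :=
    (tendsto_rpow_neg_atTop two_pos).comp tendsto_norm_cobounded_atTop
  refine squeeze_zero' (Eventually.of_forall fun z => by unfold regPow; positivity) ?_ hlim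
  filter_upwards [(tendsto_norm_cobounded_atTop (E := E)).eventually_gt_atTop 0] with z hz
  have hle : regPow (-finrank ℝ E - 2) 1 z ≤ regPow (-finrank ℝ E - 2) 0 z :=
    Real.rpow_le_rpow_of_nonpos (by positivity) (by gcongr; exact zero_le_one)
      (by linarith [(finrank ℝ E).cast_nonneg (α := ℝ)])
  calc ‖z‖ ^ finrank ℝ E * regPow (-finrank ℝ E - 2) 1 z
      ≤ ‖z‖ ^ finrank ℝ E * regPow (-finrank ℝ E - 2) 0 z := by gcongr
    _ = ‖z‖ ^ (-2 : ℝ) := by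
        rw [regPow_zero, ← Real.rpow_natCast, ← Real.rpow_add hz]
        congr 1
        ring

variable [FiniteDimensional ℝ E] [MeasurableSpace E] [BorelSpace E]

lemma integrable_regPow_one : Integrable fun z : E => regPow (-finrank ℝ E - 2) 1 z := by
  have h := integrable_rpow_neg_one_add_norm_sq (E := E) (μ := volume) (r := finrank ℝ E + 2)
    (by simp)
  refine h.congr (Eventually.of_forall fun z => ?_)
  simp only [regPow, add_comm (1 : ℝ), neg_add']

lemma integral_regPow_one_pos : 0 < ∫ z : E, regPow (-finrank ℝ E - 2) 1 z := by
  have hpos (z : E) : 0 < regPow (-finrank ℝ E - 2) 1 z := by unfold regPow; positivity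
  refine (integral_pos_iff_support_of_nonneg (fun z => (hpos z).le) integrable_regPow_one).2 ?_
  rw [Function.support_eq_univ fun z => (hpos z).ne']
  exact isOpen_univ.measure_pos _ univ_nonempty

lemma tendsto_integral_regPow_mul {g : E → ℝ} (hg : Integrable g) {x : E}
    (hgx : ContinuousAt g x) :
    Tendsto (fun ε : ℝ => ∫ y, ε * regPow (-finrank ℝ E - 2) ε (y - x) * g y) (𝓝[>] 0)
      (𝓝 ((∫ z : E, regPow (-finrank ℝ E - 2) 1 z) * g x)) := by
  set m := ∫ z : E, regPow (-finrank ℝ E - 2) 1 z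
  have hm : 0 < m := integral_regPow_one_pos
  have hscale : Tendsto (fun ε : ℝ => (√ε)⁻¹) (𝓝[>] 0) atTop := by
    refine tendsto_inv_nhdsGT_zero.comp (tendsto_nhdsWithin_iff.2 ⟨?_, ?_⟩)
    · simpa using (Real.continuous_sqrt.tendsto 0).mono_left nhdsWithin_le_nhds
    · filter_upwards [self_mem_nhdsWithin] with ε hε using Real.sqrt_pos.2 hε
  have hpeak := (tendsto_integral_comp_smul_smul_of_integrable' (μ := volume)
    (φ := fun z : E => m⁻¹ * regPow (-finrank ℝ E - 2) 1 z)
    (fun z => by unfold regPow; positivity)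
    (by rw [integral_const_mul]; exact inv_mul_cancel₀ hm.ne')
    (by simpa [mul_left_comm] using
      (tendsto_norm_pow_mul_regPow_cobounded (E := E)).const_mul m⁻¹) hg hgx).comp hscale
  refine (hpeak.const_mul m).congr' ?_
  filter_upwards [self_mem_nhdsWithin] with ε (hε : 0 < ε)
  rw [Function.comp_apply, ← integral_const_mul]
  refine integral_congr_ae (Eventually.of_forall fun y => ?_)
  calc m * (((√ε)⁻¹ ^ finrank ℝ E * (m⁻¹ * regPow (-finrank ℝ E - 2) 1 ((√ε)⁻¹ • (x - y)))) * g y)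
      = (m * m⁻¹) * ((√ε)⁻¹ ^ finrank ℝ E *
          regPow (-finrank ℝ E - 2) 1 ((√ε)⁻¹ • (x - y))) * g y := by ring
    _ = ε * regPow (-finrank ℝ E - 2) ε (y - x) * g y := by
        rw [inv_sqrt_pow_mul_regPow_smul hε, mul_inv_cancel₀ hm.ne', one_mul, regPow, regPow,
          norm_sub_rev]

variable (E) in
/-- The normalizing constant of the fundamental solution: `-Δ (‖z‖ ^ (2 - d)) = greenConst E • δ₀`,
where `d` is the dimension of `E`. -/
noncomputable def greenConst : ℝ :=
  finrank ℝ E * (finrank ℝ E - 2) * ∫ z : E, regPow (-finrank ℝ E - 2) 1 z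

lemma greenConst_pos (hE : 2 < finrank ℝ E) : 0 < greenConst E := by
  have : (2 : ℝ) < finrank ℝ E := by exact_mod_cast hE
  exact mul_pos (mul_pos (by linarith) (by linarith)) integral_regPow_one_pos

end ApproximateIdentity

section GreenKernel

variable {E : Type*} [NormedAddCommGroup E] [InnerProductSpace ℝ E] [FiniteDimensional ℝ E]
  {ε : ℝ} {ζ u : E → ℝ} {x y : E}

/-- The commutator of the Laplacian with multiplication by a cutoff `ζ`, applied to the regularized
fundamental solution with pole `x`, that is, `Δ ζ * Φ + 2 * ⟪∇ ζ, ∇ Φ⟫` for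
`Φ y = regPow (2 - d) ε (y - x)` with `d` the dimension. -/
noncomputable def greenKernel (ε : ℝ) (ζ : E → ℝ) (x y : E) : ℝ :=
  Δ ζ y * regPow (2 - finrank ℝ E) ε (y - x)
    + 2 * (2 - finrank ℝ E) * regPow (-finrank ℝ E) ε (y - x) * fderiv ℝ ζ y (y - x)

lemma laplacian_mul_regPow (hε : 0 < ε) (hζ : ContDiffAt ℝ 2 ζ y) (x : E) :
    Δ (fun y => ζ y * regPow (2 - finrank ℝ E) ε (y - x)) y
      = greenKernel ε ζ x y - finrank ℝ E * (finrank ℝ E - 2) *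
        (ε * regPow (-finrank ℝ E - 2) ε (y - x) * ζ y) := by
  have hpos : 0 < ‖y - x‖ ^ 2 + ε := by positivity
  have hgrad : HasGradientAt (fun y => regPow (2 - finrank ℝ E) ε (y - x))
      (((2 - finrank ℝ E) * regPow (-finrank ℝ E) ε (y - x)) • (y - x)) y := by
    rw [hasGradientAt_iff_hasFDerivAt, map_smul]
    have := (hasFDerivAt_regPow (2 - finrank ℝ E) hpos).comp y (hasFDerivAt_sub_const x)
    rw [show (2 - finrank ℝ E - 2 : ℝ) = -finrank ℝ E by ring] at this
    exact this
  have hΔ := laplacian_regPow (2 - finrank ℝ E : ℝ) hpos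
  rw [laplacian_mul hζ (contDiff_regPow_sub _ hε x).contDiffAt,
    laplacian_comp_sub (regPow _ ε), hΔ, hgrad.gradient, inner_gradient_left, greenKernel,
    show (2 - finrank ℝ E - 4 : ℝ) = -finrank ℝ E - 2 by ring]
  simp only [map_smul, smul_eq_mul]
  ring

lemma greenKernel_eq_zero (ε : ℝ) (x : E) (hy : y ∉ tsupport (fderiv ℝ ζ)) :
    greenKernel ε ζ x y = 0 := by
  simp [greenKernel, laplacian_eq_zero_of_notMem_tsupport_fderiv hy,
    image_eq_zero_of_notMem_tsupport hy]

lemma continuousOn_greenKernel (hζ : ContDiff ℝ 2 ζ) (hx : x ∉ tsupport (fderiv ℝ ζ)) :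
    ContinuousOn (fun p : ℝ × E => greenKernel p.1 ζ x p.2) (Ici 0 ×ˢ univ) := by
  rintro ⟨ε, y⟩ ⟨hε : 0 ≤ ε, -⟩
  refine ContinuousAt.continuousWithinAt ?_
  rcases eq_or_ne y x with rfl | hyx
  · have hzero : (fun p : ℝ × E => greenKernel p.1 ζ y p.2) =ᶠ[𝓝 (ε, y)] fun _ => 0 := by
      filter_upwards [continuousAt_snd.eventually_mem
        ((isClosed_tsupport (fderiv ℝ ζ)).isOpen_compl.mem_nhds hx)] with p hp
      exact greenKernel_eq_zero _ _ hp
    exact continuousAt_const.congr hzero.symm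
  · have hregPow (s : ℝ) : ContinuousAt (fun p : ℝ × E => regPow s p.1 (p.2 - x)) (ε, y) := by
      have hpos : 0 < ‖y - x‖ ^ 2 + ε := by
        have := norm_sub_pos_iff.2 hyx
        positivity
      have hopen : IsOpen {p : ℝ × E | 0 < ‖p.2‖ ^ 2 + p.1} :=
        isOpen_lt continuous_const (by fun_prop)
      exact ((continuousOn_regPow s).continuousAt (hopen.mem_nhds hpos)).comp
        (f := fun p : ℝ × E => (p.1, p.2 - x)) (by fun_prop)
    have hΔ : Continuous (Δ ζ) := (contDiff_laplacian (m := 0) (by simpa using hζ)).continuous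
    have hfderiv : Continuous (fderiv ℝ ζ) := hζ.continuous_fderiv two_ne_zero
    have hΔ' : ContinuousAt (fun p : ℝ × E => Δ ζ p.2) (ε, y) := by fun_prop
    have hfderiv' : ContinuousAt (fun p : ℝ × E => fderiv ℝ ζ p.2 (p.2 - x)) (ε, y) := by fun_prop
    unfold greenKernel
    exact (hΔ'.mul (hregPow _)).add ((continuousAt_const.mul (hregPow _)).mul hfderiv')

variable [MeasurableSpace E] [BorelSpace E]

lemma integrable_greenKernel_mul (hζ : ContDiff ℝ 2 ζ) (hζc : HasCompactSupport (fderiv ℝ ζ))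
    (hx : x ∉ tsupport (fderiv ℝ ζ)) (hε : 0 ≤ ε) (hu : IntegrableOn u (tsupport (fderiv ℝ ζ))) :
    Integrable fun y => greenKernel ε ζ x y * u y := by
  have hcont : Continuous fun y => greenKernel ε ζ x y :=
    (continuousOn_greenKernel hζ hx).comp_continuous (f := fun y => (ε, y)) (by fun_prop)
      fun y => ⟨hε, mem_univ y⟩
  refine (integrableOn_iff_integrable_of_support_subset fun y hy => ?_).1
    (hu.continuousOn_mul hcont.continuousOn hζc)
  by_contra hyK
  exact hy (by simp [greenKernel_eq_zero ε x hyK])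

/-- The integral of `u` against the unregularized Green kernel of the cutoff `ζ`. It only involves
the values of `u` where `ζ` is not locally constant. -/
noncomputable def greenPotential (ζ u : E → ℝ) (x : E) : ℝ :=
  ∫ y, greenKernel 0 ζ x y * u y

lemma tendsto_integral_greenKernel_mul (hζ : ContDiff ℝ 2 ζ)
    (hζc : HasCompactSupport (fderiv ℝ ζ)) (hx : x ∉ tsupport (fderiv ℝ ζ))
    (hu : IntegrableOn u (tsupport (fderiv ℝ ζ))) :
    Tendsto (fun ε => ∫ y, greenKernel ε ζ x y * u y) (𝓝[>] 0) (𝓝 (greenPotential ζ u x)) := by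
  have h := continuousOn_integral_bilinear_of_locally_integrable_of_compact_support
    (μ := volume) (ContinuousLinearMap.mul ℝ ℝ) hζc (continuousOn_greenKernel hζ hx)
    (fun ε y _ hy => greenKernel_eq_zero ε x hy) hu
  simpa only [greenPotential, ContinuousLinearMap.mul_apply', mul_comm (u _)] using
    (h 0 self_mem_Ici).mono_left (nhdsWithin_mono 0 Ioi_subset_Ici_self)

theorem green_representation (hζ : ContDiff ℝ 2 ζ) (hζc : HasCompactSupport ζ)
    (hu : HarmonicOnNhd u (tsupport ζ)) (hx : x ∉ tsupport (fderiv ℝ ζ)) :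
    greenConst E * (ζ x * u x) = greenPotential ζ u x := by
  have huc : ∀ y ∈ tsupport ζ, ContinuousAt u y := fun y hy => (hu y hy).1.continuousAt
  have huK : IntegrableOn u (tsupport (fderiv ℝ ζ)) :=
    ContinuousOn.integrableOn_compact (hζc.fderiv ℝ) fun y hy =>
      (huc y (tsupport_fderiv_subset ℝ hy)).continuousWithinAt
  have hζu : Integrable fun y => ζ y * u y :=
    integrable_mul_of_continuousAt_tsupport hζ.continuous hζc huc
  have happrox := (tendsto_integral_regPow_mul hζu (x := x)
    (continuous_mul_of_continuousAt_tsupport hζ.continuous huc).continuousAt).const_mul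
      (finrank ℝ E * (finrank ℝ E - 2) : ℝ)
  rw [greenConst, mul_assoc]
  refine tendsto_nhds_unique (happrox.congr' ?_)
    (tendsto_integral_greenKernel_mul hζ (hζc.fderiv ℝ) hx huK)
  filter_upwards [self_mem_nhdsWithin] with ε (hε : 0 < ε)
  have hgreen := integral_laplacian_mul_eq_zero (μ := volume)
    (hζ.mul (contDiff_regPow_sub (2 - finrank ℝ E) hε x)) hζc.mul_right
    (hu.mono (closure_mono (Function.support_mul_subset_left _ _)))
  simp only [laplacian_mul_regPow hε hζ.contDiffAt, sub_mul] at hgreen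
  have hint : Integrable fun y => finrank ℝ E * (finrank ℝ E - 2) *
      (ε * regPow (-finrank ℝ E - 2) ε (y - x) * ζ y) * u y := by
    refine ((integrable_mul_of_continuousAt_tsupport hζ.continuous hζc fun y hy =>
      ((contDiff_regPow_sub (m := 0) (-finrank ℝ E - 2) hε x).continuous.continuousAt.const_mul
        (finrank ℝ E * (finrank ℝ E - 2) * ε)).mul (huc y hy))).congr
        (Eventually.of_forall fun y => ?_)
    simp only [Pi.mul_apply]
    ring
  rw [integral_sub (integrable_greenKernel_mul hζ (hζc.fderiv ℝ) hx hε.le huK) hint,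
    sub_eq_zero] at hgreen
  rw [hgreen, ← integral_const_mul]
  simp only [mul_assoc]

end GreenKernel

section GreenPotential

variable {E : Type*} [NormedAddCommGroup E] [InnerProductSpace ℝ E] [FiniteDimensional ℝ E]
  {c ε : ℝ} {ζ ζ₁ ζ₂ u : E → ℝ}

lemma greenKernel_sub {y : E} (hζ₁ : ContDiffAt ℝ 2 ζ₁ y) (hζ₂ : ContDiffAt ℝ 2 ζ₂ y) (ε : ℝ)
    (x : E) : greenKernel ε (ζ₁ - ζ₂) x y = greenKernel ε ζ₁ x y - greenKernel ε ζ₂ x y := by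
  simp only [greenKernel, hζ₁.laplacian_sub hζ₂,
    fderiv_sub (hζ₁.differentiableAt two_ne_zero) (hζ₂.differentiableAt two_ne_zero), sub_apply]
  ring

lemma greenKernel_comp_smul (hc : 0 < c) (hε : 0 ≤ ε) (ζ : E → ℝ) (x y : E) :
    greenKernel ε (fun z => ζ (c • z)) x y
      = c ^ finrank ℝ E * greenKernel (c ^ 2 * ε) ζ (c • x) (c • y) := by
  have hd : c ^ finrank ℝ E * c ^ (-finrank ℝ E : ℝ) = 1 := by
    rw [Real.rpow_neg hc.le, Real.rpow_natCast, mul_inv_cancel₀ (by positivity)]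
  have hd2 : c ^ finrank ℝ E * c ^ (2 - finrank ℝ E : ℝ) = c ^ 2 := by
    rw [sub_eq_add_neg, Real.rpow_add hc, mul_left_comm, hd, mul_one, Real.rpow_two]
  have hfderiv : fderiv ℝ (fun z => ζ (c • z)) y = c • fderiv ℝ ζ (c • y) :=
    fderiv_comp_smul c
  simp only [greenKernel, laplacian_comp_smul, hfderiv, smul_apply, smul_eq_mul, ← smul_sub,
    map_smul, regPow_smul hc hε]
  linear_combination (-Δ ζ (c • y) * regPow (2 - finrank ℝ E) ε (y - x)) * hd2
    - (2 * (2 - finrank ℝ E) * regPow (-finrank ℝ E) ε (y - x)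
      * c * fderiv ℝ ζ (c • y) (y - x)) * hd

variable [MeasurableSpace E] [BorelSpace E]

lemma greenPotential_sub (hζ₁ : ContDiff ℝ 2 ζ₁) (hζ₂ : ContDiff ℝ 2 ζ₂)
    (hc₁ : HasCompactSupport (fderiv ℝ ζ₁)) (hc₂ : HasCompactSupport (fderiv ℝ ζ₂))
    (hu₁ : IntegrableOn u (tsupport (fderiv ℝ ζ₁)))
    (hu₂ : IntegrableOn u (tsupport (fderiv ℝ ζ₂))) {x : E}
    (hx₁ : x ∉ tsupport (fderiv ℝ ζ₁)) (hx₂ : x ∉ tsupport (fderiv ℝ ζ₂)) :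
    greenPotential (ζ₁ - ζ₂) u x = greenPotential ζ₁ u x - greenPotential ζ₂ u x := by
  simp only [greenPotential, greenKernel_sub hζ₁.contDiffAt hζ₂.contDiffAt, sub_mul]
  exact integral_sub (integrable_greenKernel_mul hζ₁ hc₁ hx₁ le_rfl hu₁)
    (integrable_greenKernel_mul hζ₂ hc₂ hx₂ le_rfl hu₂)

lemma greenPotential_comp_smul (hc : 0 < c) (ζ u : E → ℝ) (x : E) :
    greenPotential (fun y => ζ (c • y)) u x
      = greenPotential ζ (fun y => u (c⁻¹ • y)) (c • x) := by
  have h := Measure.integral_comp_smul volume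
    (fun y => greenKernel 0 ζ (c • x) y * u (c⁻¹ • y)) c
  simp only [inv_smul_smul₀ hc.ne', smul_eq_mul] at h
  simp only [greenPotential, greenKernel_comp_smul hc le_rfl, mul_zero, mul_assoc,
    integral_const_mul, h]
  rw [abs_of_pos (by positivity), mul_inv_cancel_left₀ (by positivity)]

lemma greenPotential_eq_setIntegral (ζ u : E → ℝ) (x : E) :
    greenPotential ζ u x = ∫ y in tsupport (fderiv ℝ ζ), greenKernel 0 ζ x y * u y :=
  (setIntegral_eq_integral_of_forall_compl_eq_zero fun y hy => by
    rw [greenKernel_eq_zero 0 x hy, zero_mul]).symm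

end GreenPotential

section PotentialDecay

variable {E : Type*} [NormedAddCommGroup E] [InnerProductSpace ℝ E] [FiniteDimensional ℝ E]
  {r ρ : ℝ} {ζ : E → ℝ}

lemma mul_norm_le_norm_sub {F : Type*} [SeminormedAddCommGroup F] {x y : F} (hρ : 0 ≤ ρ)
    (hρr : ρ < r) (hy : ‖y‖ ≤ ρ) (hx : r ≤ ‖x‖) : (1 - ρ / r) * ‖x‖ ≤ ‖y - x‖ := by
  have hr : 0 < r := hρ.trans_lt hρr
  have : ρ ≤ ρ / r * ‖x‖ := by
    rw [div_mul_eq_mul_div, le_div_iff₀ hr]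
    gcongr
  linarith [norm_sub_norm_le x y, norm_sub_rev x y]

lemma abs_greenKernel_le (ζ : E → ℝ) {x y : E} (hxy : x ≠ y) :
    |greenKernel 0 ζ x y| ≤ (|Δ ζ y| + 2 * |2 - (finrank ℝ E : ℝ)| * ‖fderiv ℝ ζ y‖ / ‖y - x‖)
      * ‖y - x‖ ^ (2 - finrank ℝ E : ℝ) := by
  have ht : 0 < ‖y - x‖ := norm_sub_pos_iff.2 hxy.symm
  have hpow : ‖y - x‖ ^ (2 - finrank ℝ E : ℝ) = ‖y - x‖ ^ (-finrank ℝ E : ℝ) * ‖y - x‖ ^ 2 := by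
    rw [← Real.rpow_two, ← Real.rpow_add ht, neg_add_eq_sub]
  calc |greenKernel 0 ζ x y|
      ≤ |Δ ζ y| * ‖y - x‖ ^ (2 - finrank ℝ E : ℝ)
        + 2 * |2 - (finrank ℝ E : ℝ)| * ‖y - x‖ ^ (-finrank ℝ E : ℝ) * |fderiv ℝ ζ y (y - x)| := by
        rw [greenKernel, regPow_zero, regPow_zero]
        refine (abs_add_le _ _).trans_eq ?_
        simp only [abs_mul, Nat.abs_ofNat, Real.abs_rpow_of_nonneg (norm_nonneg _), abs_norm]
    _ ≤ |Δ ζ y| * ‖y - x‖ ^ (2 - finrank ℝ E : ℝ) + 2 * |2 - (finrank ℝ E : ℝ)|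
          * ‖y - x‖ ^ (-finrank ℝ E : ℝ) * (‖fderiv ℝ ζ y‖ * ‖y - x‖) := by
        gcongr
        exact (fderiv ℝ ζ y).le_opNorm _
    _ = _ := by
        rw [hpow]
        field_simp

lemma exists_abs_laplacian_le (hζ : ContDiff ℝ 2 ζ) (hζc : HasCompactSupport (fderiv ℝ ζ)) :
    ∃ M : ℝ, ∀ y, |Δ ζ y| ≤ M := by
  have hc : HasCompactSupport (Δ ζ) := hζc.mono' fun y hy => by
    contrapose! hy
    exact Function.notMem_support.2 (laplacian_eq_zero_of_notMem_tsupport_fderiv hy)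
  exact hc.exists_bound_of_continuous
    (contDiff_laplacian (m := 0) (by simpa using hζ)).continuous

lemma exists_abs_greenKernel_le (hE : 2 ≤ finrank ℝ E) (hζ : ContDiff ℝ 2 ζ) (hρ : 0 ≤ ρ)
    (hρr : ρ < r) (hζρ : tsupport (fderiv ℝ ζ) ⊆ closedBall 0 ρ) :
    ∃ C : ℝ, 0 ≤ C ∧ ∀ x y : E, r ≤ ‖x‖ →
      |greenKernel 0 ζ x y| ≤ C * ‖x‖ ^ (2 - finrank ℝ E : ℝ) := by
  have hζc : HasCompactSupport (fderiv ℝ ζ) :=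
    (isCompact_closedBall 0 ρ).of_isClosed_subset (isClosed_tsupport _) hζρ
  obtain ⟨M₁, hM₁⟩ := exists_abs_laplacian_le hζ hζc
  obtain ⟨M₂, hM₂⟩ := hζc.exists_bound_of_continuous (hζ.continuous_fderiv two_ne_zero)
  have hM₁0 : 0 ≤ M₁ := (abs_nonneg _).trans (hM₁ 0)
  have hM₂0 : 0 ≤ M₂ := (norm_nonneg _).trans (hM₂ 0)
  have hr : 0 < r := hρ.trans_lt hρr
  have hκ : 0 < 1 - ρ / r := sub_pos.2 ((div_lt_one hr).2 hρr)
  refine ⟨(M₁ + 2 * |2 - (finrank ℝ E : ℝ)| * M₂ / ((1 - ρ / r) * r))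
    * (1 - ρ / r) ^ (2 - finrank ℝ E : ℝ), by positivity, fun x y hx => ?_⟩
  by_cases hy : y ∈ tsupport (fderiv ℝ ζ)
  swap
  · rw [greenKernel_eq_zero 0 x hy, abs_zero]
    positivity
  have hx0 : 0 < ‖x‖ := hr.trans_le hx
  have hdist : (1 - ρ / r) * ‖x‖ ≤ ‖y - x‖ :=
    mul_norm_le_norm_sub hρ hρr (by simpa using hζρ hy) hx
  have hdist' : (1 - ρ / r) * r ≤ ‖y - x‖ := le_trans (by gcongr) hdist
  have hdim : (2 : ℝ) ≤ finrank ℝ E := by exact_mod_cast hE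
  calc |greenKernel 0 ζ x y|
      ≤ _ := abs_greenKernel_le ζ (norm_sub_pos_iff.1 ((mul_pos hκ hr).trans_le hdist')).symm
    _ ≤ (M₁ + 2 * |2 - (finrank ℝ E : ℝ)| * M₂ / ((1 - ρ / r) * r))
          * ((1 - ρ / r) * ‖x‖) ^ (2 - finrank ℝ E : ℝ) :=
        mul_le_mul (by gcongr; exacts [hM₁ y, hM₂ y])
          (Real.rpow_le_rpow_of_nonpos (by positivity) hdist (by linarith))
          (by positivity) (by positivity)
    _ = _ := by rw [Real.mul_rpow hκ.le hx0.le, ← mul_assoc]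

variable [MeasurableSpace E] [BorelSpace E]

lemma exists_abs_greenPotential_le (hE : 2 ≤ finrank ℝ E) (hζ : ContDiff ℝ 2 ζ) (hρ : 0 ≤ ρ)
    (hρr : ρ < r) (hζρ : tsupport (fderiv ℝ ζ) ⊆ closedBall 0 ρ) :
    ∃ C : ℝ, 0 ≤ C ∧ ∀ (u : E → ℝ) (M : ℝ), (∀ y ∈ tsupport (fderiv ℝ ζ), |u y| ≤ M) →
      ∀ x, r ≤ ‖x‖ → |greenPotential ζ u x| ≤ C * M * ‖x‖ ^ (2 - finrank ℝ E : ℝ) := by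
  obtain ⟨C, hC, hkernel⟩ := exists_abs_greenKernel_le hE hζ hρ hρr hζρ
  have hζc : IsCompact (tsupport (fderiv ℝ ζ)) :=
    (isCompact_closedBall 0 ρ).of_isClosed_subset (isClosed_tsupport _) hζρ
  refine ⟨C * volume.real (tsupport (fderiv ℝ ζ)), by positivity, fun u M hM x hx => ?_⟩
  rw [greenPotential_eq_setIntegral, ← Real.norm_eq_abs]
  calc ‖∫ y in tsupport (fderiv ℝ ζ), greenKernel 0 ζ x y * u y‖
      ≤ C * ‖x‖ ^ (2 - finrank ℝ E : ℝ) * M * volume.real (tsupport (fderiv ℝ ζ)) :=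
        norm_setIntegral_le_of_norm_le_const hζc.measure_lt_top fun y hy => by
          rw [norm_mul]
          exact mul_le_mul (hkernel x y hx) (hM y hy) (norm_nonneg _) (by positivity)
    _ = _ := by ring

end PotentialDecay

section Taylor

variable {V W F : Type*} [NormedAddCommGroup V] [NormedSpace ℝ V] [NormedAddCommGroup W]
  [NormedSpace ℝ W] [NormedAddCommGroup F] [NormedSpace ℝ F]

lemma norm_sub_sub_le_mul_sq_of_hasFDerivAt {s : Set V} (hs : Convex ℝ s) {f : V → F}
    {f' : V → V →L[ℝ] F} {f'' : V → V →L[ℝ] V →L[ℝ] F} {C : ℝ}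
    (hf : ∀ w ∈ s, HasFDerivAt f (f' w) w) (hf' : ∀ w ∈ s, HasFDerivAt f' (f'' w) w)
    (hC : ∀ w ∈ s, ‖f'' w‖ ≤ C) {x y : V} (hx : x ∈ s) (hy : y ∈ s) :
    ‖f y - f x - f' x (y - x)‖ ≤ C * ‖y - x‖ ^ 2 := by
  have hC0 : 0 ≤ C := (norm_nonneg (f'' x)).trans (hC x hx)
  have hseg : segment ℝ x y ⊆ s := hs.segment_subset hx hy
  have hbound : ∀ w ∈ segment ℝ x y, ‖f' w - f' x‖ ≤ C * ‖y - x‖ := fun w hw =>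
    (hs.norm_image_sub_le_of_norm_hasFDerivWithin_le
      (fun z hz => (hf' z hz).hasFDerivWithinAt) hC hx (hseg hw)).trans
        (mul_le_mul_of_nonneg_left (norm_sub_le_of_mem_segment hw) hC0)
  rw [sq, ← mul_assoc]
  exact (convex_segment x y).norm_image_sub_le_of_norm_hasFDerivWithin_le'
    (fun w hw => (hf w (hseg hw)).hasFDerivWithinAt) hbound
    (left_mem_segment ℝ x y) (right_mem_segment ℝ x y)

lemma hasFDerivAt_of_norm_sub_sub_le_mul_sq {f : V → F} {ℓ : V →L[ℝ] F} {x : V} {C : ℝ}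
    (h : ∀ᶠ y in 𝓝 x, ‖f y - f x - ℓ (y - x)‖ ≤ C * ‖y - x‖ ^ 2) :
    HasFDerivAt f ℓ x := by
  have hO : (fun y => f y - f x - ℓ (y - x)) =O[𝓝 x] fun y => ‖y - x‖ ^ 2 :=
    .of_bound C (by simpa using h)
  exact .of_isLittleO (hO.trans_isLittleO (by
    simpa using Asymptotics.isLittleO_pow_sub_sub x one_lt_two))

lemma exists_uniform_taylor {k : V × W → F} {U : Set (V × W)} (hU : IsOpen U)
    (hk : ContDiffOn ℝ 2 k U) {A : Set V} {B : Set W} (hA : IsCompact A) (hAc : Convex ℝ A)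
    (hB : IsCompact B) (hAB : A ×ˢ B ⊆ U) {x : V} (hx : x ∈ A) :
    ∃ (C : ℝ) (L : W → V →L[ℝ] F), 0 ≤ C ∧ ContinuousOn L B ∧ ∀ y ∈ B, ‖L y‖ ≤ C ∧
      ∀ ξ ∈ A, ‖k (ξ, y) - k (x, y) - L y (ξ - x)‖ ≤ C * ‖ξ - x‖ ^ 2 := by
  let D : V × W → V →L[ℝ] F := fun p => fderiv ℝ k p ∘L .inl ℝ V W
  have hD : ContDiffOn ℝ 1 D U :=
    (hk.fderiv_of_isOpen hU one_add_one_eq_two.le).clm_comp contDiffOn_const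
  obtain ⟨M₁, hM₁⟩ := hB.exists_bound_of_continuousOn (f := fun y => D (x, y))
    (hD.continuousOn.comp (by fun_prop) fun y hy => hAB ⟨hx, hy⟩)
  obtain ⟨M₂, hM₂⟩ := (hA.prod hB).exists_bound_of_continuousOn
    ((hD.continuousOn_fderiv_of_isOpen hU le_rfl).mono hAB)
  refine ⟨max 0 (max M₁ M₂), fun y => D (x, y), le_max_left _ _,
    hD.continuousOn.comp (by fun_prop) fun y hy => hAB ⟨hx, hy⟩, fun y hy =>
      ⟨(hM₁ y hy).trans (by simp), fun ξ hξ => ?_⟩⟩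
  refine norm_sub_sub_le_mul_sq_of_hasFDerivAt hAc (f := fun z => k (z, y))
    (f' := fun z => D (z, y)) (f'' := fun z => fderiv ℝ D (z, y) ∘L .inl ℝ V W)
    (fun w hw => ?_) (fun w hw => ?_) (fun w hw => ?_) hx hξ
  · exact ((hk.contDiffAt (hU.mem_nhds (hAB ⟨hw, hy⟩))).differentiableAt
      two_ne_zero).hasFDerivAt.comp w (hasFDerivAt_prodMk_left w y)
  · exact ((hD.contDiffAt (hU.mem_nhds (hAB ⟨hw, hy⟩))).differentiableAt
      one_ne_zero).hasFDerivAt.comp w (hasFDerivAt_prodMk_left w y)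
  · calc ‖fderiv ℝ D (w, y) ∘L .inl ℝ V W‖ ≤ ‖fderiv ℝ D (w, y)‖
          * ‖ContinuousLinearMap.inl ℝ V W‖ :=
          ContinuousLinearMap.opNorm_comp_le _ _
      _ ≤ M₂ := (mul_le_of_le_one_right (norm_nonneg _)
          (ContinuousLinearMap.norm_inl_le_one ℝ V W)).trans (hM₂ _ ⟨hw, hy⟩)
      _ ≤ max 0 (max M₁ M₂) := by simp

end Taylor

section PotentialTaylor

variable {E : Type*} [NormedAddCommGroup E] [InnerProductSpace ℝ E] [FiniteDimensional ℝ E]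
  {ζ : E → ℝ}

lemma contDiffOn_greenKernel (hζ : ContDiff ℝ 4 ζ) :
    ContDiffOn ℝ 2 (fun p : E × E => greenKernel 0 ζ p.1 p.2) {p | p.1 ≠ p.2} := by
  have hregPow (s : ℝ) :
      ContDiffOn ℝ 2 (fun p : E × E => regPow s 0 (p.2 - p.1)) {p | p.1 ≠ p.2} := fun p hp =>
    have hpos : 0 < ‖p.2 - p.1‖ := norm_sub_pos_iff.2 (Ne.symm hp)
    ((contDiffAt_regPow s (by positivity)).comp (f := fun p : E × E => p.2 - p.1) p
      (by fun_prop)).contDiffWithinAt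
  have hΔ : ContDiff ℝ 2 fun p : E × E => Δ ζ p.2 :=
    (contDiff_laplacian (m := 2) (hζ.of_le (by norm_num))).comp contDiff_snd
  have hfderiv : ContDiff ℝ 2 fun p : E × E => fderiv ℝ ζ p.2 (p.2 - p.1) :=
    ((hζ.fderiv_right (m := 2) (by norm_num)).comp contDiff_snd).clm_apply
      (contDiff_snd.sub contDiff_fst)
  unfold greenKernel
  exact (hΔ.contDiffOn.mul (hregPow _)).add
    ((contDiffOn_const.mul (hregPow _)).mul hfderiv.contDiffOn)

variable [MeasurableSpace E] [BorelSpace E]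

lemma greenPotential_sub_sub_eq_setIntegral (hζ : ContDiff ℝ 2 ζ)
    (hζc : HasCompactSupport (fderiv ℝ ζ)) {v : E → ℝ} {L : E → E →L[ℝ] ℝ}
    (hv : IntegrableOn v (tsupport (fderiv ℝ ζ))) (hL : ContinuousOn L (tsupport (fderiv ℝ ζ)))
    {x y : E} (hx : x ∉ tsupport (fderiv ℝ ζ)) (hy : y ∉ tsupport (fderiv ℝ ζ)) (w : E) :
    greenPotential ζ v x - greenPotential ζ v y - (∫ z in tsupport (fderiv ℝ ζ), v z • L z) w
      = ∫ z in tsupport (fderiv ℝ ζ),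
          v z * (greenKernel 0 ζ x z - greenKernel 0 ζ y z - L z w) := by
  have hkx := (integrable_greenKernel_mul hζ hζc hx le_rfl hv).integrableOn
    (s := tsupport (fderiv ℝ ζ))
  have hky := (integrable_greenKernel_mul hζ hζc hy le_rfl hv).integrableOn
    (s := tsupport (fderiv ℝ ζ))
  have hvL : IntegrableOn (fun z => v z • L z) (tsupport (fderiv ℝ ζ)) :=
    hv.smul_continuousOn hL hζc
  have hvLw : IntegrableOn (fun z => (v z • L z) w) (tsupport (fderiv ℝ ζ)) :=
    (ContinuousLinearMap.apply ℝ ℝ w).integrable_comp hvL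
  rw [greenPotential_eq_setIntegral, greenPotential_eq_setIntegral,
    ContinuousLinearMap.integral_apply hvL, ← integral_sub hkx hky,
    ← integral_sub (by exact hkx.sub hky) hvLw]
  congr 1 with z
  rw [smul_apply, smul_eq_mul]
  ring

lemma exists_greenPotential_taylor (hζ : ContDiff ℝ 4 ζ) (hζc : HasCompactSupport (fderiv ℝ ζ))
    (hζd : Disjoint (closedBall 0 1) (tsupport (fderiv ℝ ζ))) :
    ∃ C : ℝ, 0 ≤ C ∧ ∀ (v : E → ℝ) (M : ℝ), IntegrableOn v (tsupport (fderiv ℝ ζ)) →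
      (∀ y ∈ tsupport (fderiv ℝ ζ), |v y| ≤ M) → ∃ ℓ : E →L[ℝ] ℝ, ‖ℓ‖ ≤ C * M ∧
        ∀ ξ : E, ‖ξ‖ ≤ 1 →
          |greenPotential ζ v ξ - greenPotential ζ v 0 - ℓ ξ| ≤ C * M * ‖ξ‖ ^ 2 := by
  set K := tsupport (fderiv ℝ ζ)
  have hKc : IsCompact K := hζc
  obtain ⟨C, L, hC, hL, hCL⟩ := exists_uniform_taylor
    (isOpen_ne_fun continuous_fst continuous_snd) (contDiffOn_greenKernel hζ)
    (isCompact_closedBall (0 : E) 1) (convex_closedBall 0 1) hKc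
    (fun p hp => hζd.ne_of_mem hp.1 hp.2) (mem_closedBall_self zero_le_one)
  simp only [sub_zero] at hCL
  refine ⟨C * volume.real K, by positivity, fun v M hv hM => ⟨∫ y in K, v y • L y, ?_, ?_⟩⟩
  · calc ‖∫ y in K, v y • L y‖ ≤ M * C * volume.real K :=
          norm_setIntegral_le_of_norm_le_const hKc.measure_lt_top fun y hy => by
            rw [norm_smul]
            exact mul_le_mul (hM y hy) (hCL y hy).1 (norm_nonneg _)
              ((abs_nonneg _).trans (hM y hy))
      _ = C * volume.real K * M := by ring
  · intro ξ hξ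
    have hξ : ξ ∈ closedBall 0 1 := by simpa using hξ
    rw [greenPotential_sub_sub_eq_setIntegral (hζ.of_le (by norm_num)) hζc hv hL
      (hζd.notMem_of_mem_left hξ) (hζd.notMem_of_mem_left (by simp)), ← Real.norm_eq_abs]
    calc _ ≤ M * (C * ‖ξ‖ ^ 2) * volume.real K :=
          norm_setIntegral_le_of_norm_le_const hKc.measure_lt_top fun y hy => by
            rw [norm_mul]
            exact mul_le_mul (hM y hy) ((hCL y hy).2 ξ hξ) (norm_nonneg _)
              ((abs_nonneg _).trans (hM y hy))
      _ = C * volume.real K * M * ‖ξ‖ ^ 2 := by ring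

end PotentialTaylor

section Cutoff

variable {E : Type*} [NormedAddCommGroup E] [InnerProductSpace ℝ E] {r : ℝ} {y : E}

/-- A smooth radial cutoff at scale `r`: it is `1` on the ball of radius `5 r / 4` and vanishes
outside the ball of radius `7 r / 4`. -/
noncomputable def cutoff (r : ℝ) (y : E) : ℝ :=
  (⟨5 / 4, 7 / 4, by norm_num, by norm_num⟩ : ContDiffBump (0 : E)) (r⁻¹ • y)

lemma contDiff_cutoff {m : ℕ∞} (r : ℝ) : ContDiff ℝ m (cutoff r : E → ℝ) :=
  (ContDiffBump.contDiff _).comp (contDiff_const_smul r⁻¹)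

lemma cutoff_eq_cutoff_one_smul (r : ℝ) : (cutoff r : E → ℝ) = fun y => cutoff 1 (r⁻¹ • y) := by
  ext y
  simp only [cutoff, inv_one, one_smul]

lemma cutoff_eq_one (hr : 0 < r) (hy : ‖y‖ ≤ 5 / 4 * r) : cutoff r y = 1 := by
  refine ContDiffBump.one_of_mem_closedBall _ ?_
  rw [mem_closedBall_zero_iff, norm_smul, norm_inv, Real.norm_of_nonneg hr.le]
  exact (inv_mul_le_iff₀' hr).2 hy

lemma cutoff_eq_zero (hr : 0 < r) (hy : 7 / 4 * r ≤ ‖y‖) : cutoff r y = 0 := by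
  refine ContDiffBump.zero_of_le_dist _ ?_
  rw [dist_zero_right, norm_smul, norm_inv, Real.norm_of_nonneg hr.le]
  exact (le_inv_mul_iff₀' hr).2 hy

lemma tsupport_cutoff_subset (hr : 0 < r) :
    tsupport (cutoff r : E → ℝ) ⊆ closedBall 0 (7 / 4 * r) := by
  refine closure_minimal (fun y hy => ?_) isClosed_closedBall
  by_contra hy'
  rw [mem_closedBall_zero_iff, not_le] at hy'
  exact hy (cutoff_eq_zero hr hy'.le)

lemma hasCompactSupport_cutoff [FiniteDimensional ℝ E] (hr : 0 < r) :
    HasCompactSupport (cutoff r : E → ℝ) :=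
  (isCompact_closedBall 0 _).of_isClosed_subset (isClosed_tsupport _) (tsupport_cutoff_subset hr)

lemma tsupport_fderiv_cutoff_subset (hr : 0 < r) :
    tsupport (fderiv ℝ (cutoff r : E → ℝ)) ⊆ {y | 5 / 4 * r ≤ ‖y‖ ∧ ‖y‖ ≤ 7 / 4 * r} := by
  refine subset_inter (closure_minimal (fun y hy => ?_)
    (isClosed_le continuous_const continuous_norm)) fun y hy =>
      mem_closedBall_zero_iff.1 (tsupport_cutoff_subset hr (tsupport_fderiv_subset ℝ hy))
  by_contra hy'
  have hlt : ‖y‖ < 5 / 4 * r := not_le.1 hy'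
  have hconst : (cutoff r : E → ℝ) =ᶠ[𝓝 y] fun _ => 1 := by
    filter_upwards [continuous_norm.continuousAt.eventually_lt continuousAt_const hlt] with z hz
    exact cutoff_eq_one hr hz.le
  exact hy (by rw [hconst.fderiv_eq, fderiv_const_apply])

end Cutoff

section InteriorGradient

variable {E : Type*} [NormedAddCommGroup E] [InnerProductSpace ℝ E] [FiniteDimensional ℝ E]
  [MeasurableSpace E] [BorelSpace E]

lemma greenConst_mul_eq_greenPotential_cutoff {u : E → ℝ}
    (hu : HarmonicOnNhd u (closedBall 0 2)) {x : E} (hx : ‖x‖ ≤ 1) :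
    greenConst E * u x = greenPotential (cutoff 1) u x := by
  have h := green_representation (contDiff_cutoff (m := 2) 1) (hasCompactSupport_cutoff one_pos)
    (hu.mono ((tsupport_cutoff_subset one_pos).trans (closedBall_subset_closedBall (by norm_num))))
    (x := x) fun hx' => by linarith [(tsupport_fderiv_cutoff_subset one_pos hx').1]
  rwa [cutoff_eq_one one_pos (by linarith), one_mul] at h

lemma exists_norm_fderiv_zero_le_of_harmonicOnNhd (hE : 2 < finrank ℝ E) :
    ∃ C : ℝ, 0 ≤ C ∧ ∀ (u : E → ℝ) (M : ℝ), HarmonicOnNhd u (closedBall 0 2) →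
      (∀ y ∈ closedBall 0 2, |u y| ≤ M) → ‖fderiv ℝ u 0‖ ≤ C * M := by
  have hannulus : tsupport (fderiv ℝ (cutoff 1 : E → ℝ)) ⊆ closedBall 0 2 := fun y hy => by
    rw [mem_closedBall_zero_iff]
    linarith [(tsupport_fderiv_cutoff_subset one_pos hy).2]
  have hcompact : HasCompactSupport (fderiv ℝ (cutoff 1 : E → ℝ)) :=
    (hasCompactSupport_cutoff one_pos).fderiv ℝ
  obtain ⟨C, hC, htaylor⟩ := exists_greenPotential_taylor (E := E) (contDiff_cutoff 1) hcompact
    (disjoint_left.2 fun y hy hy' => by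
      linarith [mem_closedBall_zero_iff.1 hy, (tsupport_fderiv_cutoff_subset one_pos hy').1])
  have hgreen := greenConst_pos hE
  refine ⟨(greenConst E)⁻¹ * C, by positivity, fun u M hu hM => ?_⟩
  obtain ⟨ℓ, hℓ, hexp⟩ := htaylor u M
    ((hu.continuousOn.mono hannulus).integrableOn_compact hcompact) fun y hy => hM y (hannulus hy)
  have hderiv : HasFDerivAt (fun y => greenConst E * u y) ℓ 0 := by
    refine hasFDerivAt_of_norm_sub_sub_le_mul_sq (C := C * M) ?_
    filter_upwards [closedBall_mem_nhds 0 one_pos] with ξ hξ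
    have hξ : ‖ξ‖ ≤ 1 := by simpa using hξ
    rw [greenConst_mul_eq_greenPotential_cutoff hu hξ,
      greenConst_mul_eq_greenPotential_cutoff hu (by simp), sub_zero]
    exact hexp ξ hξ
  have hu' : HasFDerivAt u ((greenConst E)⁻¹ • ℓ) 0 := by
    simpa only [inv_mul_cancel_left₀ hgreen.ne'] using hderiv.const_mul (greenConst E)⁻¹
  rw [hu'.fderiv, norm_smul, norm_inv, Real.norm_of_nonneg hgreen.le, mul_assoc]
  gcongr

theorem exists_norm_fderiv_le_of_harmonicOnNhd (hE : 2 < finrank ℝ E) :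
    ∃ C : ℝ, 0 ≤ C ∧ ∀ (u : E → ℝ) (x : E) (r M : ℝ), 0 < r →
      HarmonicOnNhd u (closedBall x r) → (∀ y ∈ closedBall x r, |u y| ≤ M) →
      ‖fderiv ℝ u x‖ ≤ C * M / r := by
  obtain ⟨C, hC, hgrad⟩ := exists_norm_fderiv_zero_le_of_harmonicOnNhd hE
  refine ⟨2 * C, by positivity, fun u x r M hr hu hM => ?_⟩
  have hball : ∀ y ∈ closedBall (0 : E) 2, (r / 2) • y + x ∈ closedBall x r := fun y hy => by
    rw [mem_closedBall_zero_iff] at hy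
    rw [mem_closedBall_iff_norm, add_sub_cancel_right, norm_smul,
      Real.norm_of_nonneg (by positivity)]
    linarith [mul_le_mul_of_nonneg_left hy (half_pos hr).le]
  have h := hgrad (fun y => u ((r / 2) • y + x)) M
    (fun y hy => harmonicAt_comp_smul_add (hu _ (hball y hy))) fun y hy => hM _ (hball y hy)
  rw [fderiv_comp_smul (f := fun z => u (z + x)) (r / 2), fderiv_comp_add_right, smul_zero,
    zero_add, norm_smul, Real.norm_of_nonneg (by positivity)] at h
  rw [le_div_iff₀ hr]
  linarith

end InteriorGradient

section ExteriorRepresentation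

variable {E : Type*} [NormedAddCommGroup E] [InnerProductSpace ℝ E]

lemma cutoff_sub_cutoff_one_eventuallyEq_one {R : ℝ} {x : E} (hx : 2 ≤ ‖x‖) (hxR : ‖x‖ ≤ R) :
    (cutoff R - cutoff 1 : E → ℝ) =ᶠ[𝓝 x] fun _ => 1 := by
  have hlt : ‖x‖ < 5 / 4 * R := by linarith
  have hgt : 7 / 4 * 1 < ‖x‖ := by linarith
  filter_upwards [continuous_norm.continuousAt.eventually_lt continuousAt_const hlt,
    continuousAt_const.eventually_lt continuous_norm.continuousAt hgt] with y hyR hy1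
  rw [Pi.sub_apply, cutoff_eq_one (by linarith) hyR.le, cutoff_eq_zero one_pos hy1.le, sub_zero]

lemma tsupport_cutoff_sub_cutoff_one_subset {R : ℝ} (hR : 1 ≤ R) :
    tsupport (cutoff R - cutoff 1 : E → ℝ) ⊆ {x | 1 < ‖x‖} := by
  have hsub : tsupport (cutoff R - cutoff 1 : E → ℝ) ⊆ {x | 5 / 4 ≤ ‖x‖} := by
    refine closure_minimal (fun y hy => ?_) (isClosed_le continuous_const continuous_norm)
    by_contra hy'
    have hlt : ‖y‖ < 5 / 4 := not_le.1 hy'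
    refine hy ?_
    rw [Pi.sub_apply, cutoff_eq_one (by linarith) (by linarith),
      cutoff_eq_one one_pos (by linarith), sub_self]
  exact fun y hy => lt_of_lt_of_le (by norm_num : (1 : ℝ) < 5 / 4) (hsub hy)

variable [FiniteDimensional ℝ E] [MeasurableSpace E] [BorelSpace E]

lemma greenConst_mul_eq_greenPotential_sub {u : E → ℝ} (hu : HarmonicOnNhd u {x | 1 < ‖x‖})
    {R : ℝ} {x : E} (hx : 2 ≤ ‖x‖) (hxR : ‖x‖ ≤ R) :
    greenConst E * u x
      = greenPotential (cutoff 1) (fun y => u (R • y)) (R⁻¹ • x)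
        - greenPotential (cutoff 1) u x := by
  have hR : 0 < R := by linarith
  have hannulus {r : ℝ} (hr : 1 ≤ r) : tsupport (fderiv ℝ (cutoff r : E → ℝ)) ⊆ {x | 1 < ‖x‖} :=
    fun y hy => by
      have : 5 / 4 * r ≤ ‖y‖ := (tsupport_fderiv_cutoff_subset (by linarith) hy).1
      exact lt_of_lt_of_le (by linarith) this
  have hcompact {r : ℝ} (hr : 0 < r) : HasCompactSupport (fderiv ℝ (cutoff r : E → ℝ)) :=
    (hasCompactSupport_cutoff hr).fderiv ℝ
  have hint {r : ℝ} (hr : 1 ≤ r) : IntegrableOn u (tsupport (fderiv ℝ (cutoff r : E → ℝ))) :=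
    ContinuousOn.integrableOn_compact (hcompact (by linarith)) fun y hy =>
      (hu y (hannulus hr hy)).1.continuousAt.continuousWithinAt
  have hone := cutoff_sub_cutoff_one_eventuallyEq_one hx hxR
  have hrep := green_representation (ζ := cutoff R - cutoff 1)
    ((contDiff_cutoff R).sub (contDiff_cutoff 1))
    ((hasCompactSupport_cutoff hR).sub (hasCompactSupport_cutoff one_pos))
    (hu.mono (tsupport_cutoff_sub_cutoff_one_subset (by linarith)))
    (notMem_tsupport_iff_eventuallyEq.2 (hone.fderiv.trans (by rw [fderiv_fun_const])))
  rw [hone.eq_of_nhds, one_mul, greenPotential_sub (contDiff_cutoff R) (contDiff_cutoff 1)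
    (hcompact hR) (hcompact one_pos) (hint (by linarith)) (hint le_rfl)
    (fun h => by linarith [(tsupport_fderiv_cutoff_subset hR h).1])
    (fun h => by linarith [(tsupport_fderiv_cutoff_subset one_pos h).2])] at hrep
  rw [hrep, cutoff_eq_cutoff_one_smul R, greenPotential_comp_smul (inv_pos.2 hR), inv_inv]

end ExteriorRepresentation

section AffineLimit

variable {V ι : Type*} [NormedAddCommGroup V] [NormedSpace ℝ V] [FiniteDimensional ℝ V]
  [Nontrivial V] {l : Filter ι} [l.NeBot]

lemma exists_affine_eq_of_tendsto {a : ι → ℝ} {ℓ : ι → V →L[ℝ] ℝ} {g : V → ℝ} {r : ℝ}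
    (h : ∀ x, r ≤ ‖x‖ → Tendsto (fun k => a k + ℓ k x) l (𝓝 (g x))) :
    ∃ (a' : ℝ) (ℓ' : V →L[ℝ] ℝ), ∀ x, r ≤ ‖x‖ → g x = a' + ℓ' x := by
  -- Every `x` is the midpoint of two points outside the ball, so convergence holds everywhere.
  have hconv : ∀ x, ∃ m, Tendsto (fun k => a k + ℓ k x) l (𝓝 m) := fun x => by
    obtain ⟨p, hp⟩ := NormedSpace.exists_lt_norm ℝ V (r + ‖x‖)
    have hadd : r ≤ ‖p + x‖ := by linarith [norm_sub_le_norm_add p x]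
    have hsub : r ≤ ‖x - p‖ := by linarith [norm_sub_norm_le p x, norm_sub_rev p x]
    refine ⟨_, (((h _ hadd).add (h _ hsub)).div_const 2).congr fun k => ?_⟩
    rw [map_add, map_sub]
    ring
  choose f hf using hconv
  have ha : Tendsto a l (𝓝 (f 0)) := by simpa only [map_zero, add_zero] using hf 0
  have hℓ : ∀ x, Tendsto (fun k => ℓ k x) l (𝓝 (f x - f 0)) := fun x => by
    simpa only [add_sub_cancel_left] using (hf x).sub ha
  let L : V →ₗ[ℝ] ℝ := linearMapOfTendsto (fun x => f x - f 0) (fun k => (ℓ k : V →ₗ[ℝ] ℝ))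
    (tendsto_pi_nhds.2 hℓ)
  exact ⟨f 0, L.toContinuousLinearMap, fun x hx =>
    tendsto_nhds_unique (h x hx) (ha.add (hℓ x))⟩

lemma exists_affine_eq_of_abs_sub_le {g : V → ℝ} {r D : ℝ}
    (h : ∀ R, r ≤ R → ∃ (a : ℝ) (ℓ : V →L[ℝ] ℝ), ∀ x, r ≤ ‖x‖ → ‖x‖ ≤ R →
      |g x - (a + ℓ x)| ≤ D * ‖x‖ ^ 2 / R) :
    ∃ (a : ℝ) (ℓ : V →L[ℝ] ℝ), ∀ x, r ≤ ‖x‖ → g x = a + ℓ x := by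
  choose a ℓ haℓ using fun k : ℕ => h (r + k) (by linarith [k.cast_nonneg (α := ℝ)])
  refine exists_affine_eq_of_tendsto (l := atTop) (a := a) (ℓ := ℓ) fun x hx => ?_
  have htop : Tendsto (fun k : ℕ => r + (k : ℝ)) atTop atTop :=
    tendsto_atTop_add_const_left _ _ tendsto_natCast_atTop_atTop
  rw [tendsto_iff_norm_sub_tendsto_zero]
  refine squeeze_zero' (Eventually.of_forall fun k => norm_nonneg _) ?_
    (htop.const_div_atTop (D * ‖x‖ ^ 2))
  filter_upwards [htop.eventually_ge_atTop ‖x‖] with k hk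
  rw [norm_sub_rev]
  exact haℓ k x hx hk

end AffineLimit

section AffineAsymptotics

variable {E : Type*} [NormedAddCommGroup E] [InnerProductSpace ℝ E] [FiniteDimensional ℝ E]
  [MeasurableSpace E] [BorelSpace E]

lemma exists_affine_eq_greenConst_mul_add [Nontrivial E] {u : E → ℝ}
    (hu : HarmonicOnNhd u {x | 1 < ‖x‖}) (hle : ∀ x, 1 < ‖x‖ → |u x| ≤ ‖x‖) :
    ∃ (a : ℝ) (ℓ : E →L[ℝ] ℝ), ∀ x, 2 ≤ ‖x‖ →
      greenConst E * u x + greenPotential (cutoff 1) u x = a + ℓ x := by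
  have hcompact : HasCompactSupport (fderiv ℝ (cutoff 1 : E → ℝ)) :=
    (hasCompactSupport_cutoff one_pos).fderiv ℝ
  obtain ⟨C, -, htaylor⟩ := exists_greenPotential_taylor (E := E) (contDiff_cutoff 1) hcompact
    (disjoint_left.2 fun y hy hy' => by
      linarith [mem_closedBall_zero_iff.1 hy, (tsupport_fderiv_cutoff_subset one_pos hy').1])
  refine exists_affine_eq_of_abs_sub_le (D := 2 * C) fun R hR => ?_
  have hR0 : 0 < R := by linarith
  have hscale : ∀ y ∈ tsupport (fderiv ℝ (cutoff 1 : E → ℝ)), 1 < ‖R • y‖ ∧ ‖R • y‖ ≤ 2 * R :=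
    fun y hy => by
      obtain ⟨hy1, hy2⟩ := tsupport_fderiv_cutoff_subset one_pos hy
      rw [norm_smul, Real.norm_of_nonneg hR0.le]
      constructor <;> nlinarith
  obtain ⟨ℓ, -, hexp⟩ := htaylor (fun y => u (R • y)) (2 * R)
    (ContinuousOn.integrableOn_compact hcompact fun y hy =>
      ((hu _ (hscale y hy).1).1.continuousAt.comp (by fun_prop)).continuousWithinAt)
    fun y hy => (hle _ (hscale y hy).1).trans (hscale y hy).2
  refine ⟨greenPotential (cutoff 1) (fun y => u (R • y)) 0, R⁻¹ • ℓ, fun x hx hxR => ?_⟩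
  have hxn : ‖R⁻¹ • x‖ = ‖x‖ / R := by
    rw [norm_smul, norm_inv, Real.norm_of_nonneg hR0.le, inv_mul_eq_div]
  have h := hexp (R⁻¹ • x) (by rw [hxn]; exact (div_le_one hR0).2 hxR)
  rw [hxn, map_smul, sub_sub] at h
  rw [greenConst_mul_eq_greenPotential_sub hu hx hxR, sub_add_cancel]
  refine h.trans_eq ?_
  field_simp

lemma exists_inner_affine_sub_le (hE : 2 < finrank ℝ E) :
    ∃ C : ℝ, 0 ≤ C ∧ ∀ u : E → ℝ, HarmonicOnNhd u {x | 1 < ‖x‖} →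
      (∀ x, 1 < ‖x‖ → |u x| ≤ ‖x‖) → ∃ (b : E) (c : ℝ), ∀ x, 2 ≤ ‖x‖ →
        |u x - (innerSL ℝ b x + c)| ≤ C * ‖x‖ ^ (2 - finrank ℝ E : ℝ) := by
  have hnontrivial : Nontrivial E := nontrivial_of_finrank_pos (R := ℝ) (by lia)
  have hannulus {y : E} (hy : y ∈ tsupport (fderiv ℝ (cutoff 1 : E → ℝ))) :
      1 < ‖y‖ ∧ ‖y‖ ≤ 7 / 4 := by
    obtain ⟨hy1, hy2⟩ := tsupport_fderiv_cutoff_subset one_pos hy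
    constructor <;> linarith
  obtain ⟨C, hC, hdecay⟩ := exists_abs_greenPotential_le (E := E) (r := 2) hE.le
    (contDiff_cutoff 1) (by norm_num : (0 : ℝ) ≤ 7 / 4) (by norm_num) fun y hy =>
      mem_closedBall_zero_iff.2 (hannulus hy).2
  have hgreen := greenConst_pos hE
  refine ⟨(greenConst E)⁻¹ * (C * (7 / 4)), by positivity, fun u hu hle => ?_⟩
  obtain ⟨a, ℓ, haℓ⟩ := exists_affine_eq_greenConst_mul_add hu hle
  refine ⟨(toDual ℝ E).symm ((greenConst E)⁻¹ • ℓ), (greenConst E)⁻¹ * a, fun x hx => ?_⟩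
  have herror : u x - (innerSL ℝ ((toDual ℝ E).symm ((greenConst E)⁻¹ • ℓ)) x
      + (greenConst E)⁻¹ * a) = -((greenConst E)⁻¹ * greenPotential (cutoff 1) u x) := by
    have hinner : innerSL ℝ ((toDual ℝ E).symm ((greenConst E)⁻¹ • ℓ)) x
        = (greenConst E)⁻¹ * ℓ x := toDual_symm_apply
    rw [hinner]
    field_simp
    linarith [haℓ x hx]
  rw [herror, abs_neg, abs_mul, abs_of_pos (inv_pos.2 hgreen), mul_assoc]
  gcongr
  exact hdecay u (7 / 4) (fun y hy => (hle y (hannulus hy).1).trans (hannulus hy).2) x hx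

lemma exists_norm_fderiv_sub_le_of_inner_affine_sub_le (hE : 2 < finrank ℝ E) :
    ∃ C : ℝ, 0 ≤ C ∧ ∀ (u : E → ℝ) (b : E) (c A : ℝ), HarmonicOnNhd u {x | 1 < ‖x‖} →
      (∀ x, 2 ≤ ‖x‖ → |u x - (innerSL ℝ b x + c)| ≤ A * ‖x‖ ^ (2 - finrank ℝ E : ℝ)) →
      ∀ x, 4 ≤ ‖x‖ → ‖fderiv ℝ u x - innerSL ℝ b‖ ≤ C * A * ‖x‖ ^ (1 - finrank ℝ E : ℝ) := by
  obtain ⟨C, hC, hgrad⟩ := exists_norm_fderiv_le_of_harmonicOnNhd hE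
  refine ⟨C * (1 / 2) ^ (1 - finrank ℝ E : ℝ), by positivity, fun u b c A hu hA x hx => ?_⟩
  have hdim : (2 : ℝ) < finrank ℝ E := mod_cast hE
  have hhalf : 0 < 1 / 2 * ‖x‖ := by linarith
  have hA0 : 0 ≤ A := nonneg_of_mul_nonneg_left ((abs_nonneg _).trans (hA x (by linarith)))
    (Real.rpow_pos_of_pos (by linarith) _)
  have hfar : ∀ y ∈ closedBall x (1 / 2 * ‖x‖), 1 / 2 * ‖x‖ ≤ ‖y‖ := fun y hy => by
    rw [mem_closedBall_iff_norm, norm_sub_rev] at hy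
    linarith [norm_sub_norm_le x y]
  have hux : ∀ y ∈ closedBall x (1 / 2 * ‖x‖), HarmonicAt u y := fun y hy =>
    hu y (show 1 < ‖y‖ by linarith [hfar y hy])
  have h := hgrad (fun y => u y - (innerSL ℝ b y + c)) x (1 / 2 * ‖x‖)
    (A * (1 / 2 * ‖x‖) ^ (2 - finrank ℝ E : ℝ)) hhalf
    (fun y hy => (hux y hy).sub ((harmonicAt_clm _ y).add (harmonicAt_const c)))
    fun y hy => (hA y (by linarith [hfar y hy])).trans (mul_le_mul_of_nonneg_left
      (Real.rpow_le_rpow_of_nonpos hhalf (hfar y hy) (by linarith)) hA0)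
  rw [fderiv_fun_sub ((hux x (mem_closedBall_self hhalf.le)).1.differentiableAt two_ne_zero)
    (by fun_prop), ((innerSL ℝ b).hasFDerivAt.add_const c).fderiv] at h
  refine h.trans_eq ?_
  rw [mul_div_assoc, mul_div_assoc, ← Real.rpow_sub_one hhalf.ne',
    show (2 - finrank ℝ E - 1 : ℝ) = 1 - finrank ℝ E by ring,
    Real.mul_rpow (by norm_num) (norm_nonneg x)]
  ring

end AffineAsymptotics

lemma harmonicOnNhd_of_lap_eq_zero {n : ℕ} {u : EuclideanSpace ℝ (Fin n) → ℝ}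
    {s : Set (EuclideanSpace ℝ (Fin n))} (hs : IsOpen s) (hu : ContDiffOn ℝ 2 u s)
    (hu0 : ∀ x ∈ s, lap n u x = 0) : HarmonicOnNhd u s := by
  refine fun x hx => ⟨hu.contDiffAt (hs.mem_nhds hx), ?_⟩
  filter_upwards [hs.mem_nhds hx] with y hy
  rw [laplacian_eq_sum_fderiv_fderiv_apply (EuclideanSpace.basisFun (Fin n) ℝ)
    (hu.contDiffAt (hs.mem_nhds hy))]
  simpa only [EuclideanSpace.basisFun_apply, lap, Pi.zero_apply] using hu0 y hy

theorem stmt17_general {E : Type*} [NormedAddCommGroup E] [InnerProductSpace ℝ E]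
    [FiniteDimensional ℝ E] (hE : 3 ≤ finrank ℝ E) :
    ∃ C : ℝ, 0 < C ∧
      ∀ u : E → ℝ, HarmonicOnNhd u {x | 1 < ‖x‖} → (∀ x, 1 < ‖x‖ → |u x| ≤ ‖x‖) →
        ∃ (b : E) (c : ℝ),
          (∀ x, 2 ≤ ‖x‖ → |u x - (innerSL ℝ b x + c)| ≤ C * ‖x‖ ^ (2 - finrank ℝ E : ℝ)) ∧
          (∀ x, 4 ≤ ‖x‖ →
            ‖fderiv ℝ u x - innerSL ℝ b‖ ≤ C * ‖x‖ ^ (1 - finrank ℝ E : ℝ)) := by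
  borelize E
  obtain ⟨A, hA, haffine⟩ := exists_inner_affine_sub_le hE
  obtain ⟨B, hB, hgrad⟩ := exists_norm_fderiv_sub_le_of_inner_affine_sub_le hE
  refine ⟨A + B * A + 1, by positivity, fun u hu hle => ?_⟩
  obtain ⟨b, c, hbc⟩ := haffine u hu hle
  refine ⟨b, c, fun x hx => (hbc x hx).trans ?_,
    fun x hx => (hgrad u b c A hu hbc x hx).trans ?_⟩ <;>
  · gcongr
    linarith [mul_nonneg hB hA]

/-- a harmonic function of linear growth in an exterior domain is
asymptotic to an affine function `P(x) = b·x + c` with rate `|x|^{2−n}`, and its gradient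
converges to `b` with rate `|x|^{1−n}`; the constant `C` depends only on `n`. -/
theorem stmt17 (n : ℕ) (hn : 3 ≤ n) :
    ∃ C : ℝ, 0 < C ∧
      ∀ u : EuclideanSpace ℝ (Fin n) → ℝ,
        ContinuousOn u {x : EuclideanSpace ℝ (Fin n) | 1 ≤ ‖x‖} →
        ContDiffOn ℝ 2 u {x : EuclideanSpace ℝ (Fin n) | 1 < ‖x‖} →
        (∀ x : EuclideanSpace ℝ (Fin n), 1 < ‖x‖ → lap n u x = 0) →
        (∀ x : EuclideanSpace ℝ (Fin n), 1 ≤ ‖x‖ → |u x| ≤ ‖x‖) →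
        ∃ (b : EuclideanSpace ℝ (Fin n)) (c : ℝ),
          (∀ x : EuclideanSpace ℝ (Fin n), 2 ≤ ‖x‖ →
            |u x - ((innerSL ℝ b) x + c)| ≤ C * ‖x‖ ^ ((2 : ℝ) - n)) ∧
          (∀ x : EuclideanSpace ℝ (Fin n), 4 ≤ ‖x‖ →
            ‖fderiv ℝ u x - innerSL ℝ b‖ ≤ C * ‖x‖ ^ ((1 : ℝ) - n)) := by
  obtain ⟨C, hC, h⟩ := stmt17_general (E := EuclideanSpace ℝ (Fin n)) (by simpa using hn)
  rw [finrank_euclideanSpace_fin] at h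
  exact ⟨C, hC, fun u _ hu hu0 hle => h u (harmonicOnNhd_of_lap_eq_zero
    (isOpen_lt continuous_const continuous_norm) hu hu0) fun x hx => hle x hx.le⟩
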